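/- Let m be a positive integer, let σ ∈ ℝ satisfy m−1 < σ < m, and let q ≥ 1 be an integer. Let r : [0,1] → ℝ be (m−1)-times continuously differentiable on [0,1]. Define φ(x) = D*^σ r(x) := (d/dx)^m [ (1/Γ(m−σ)) ∫₀ˣ (x-t)^{m−σ−1} ( r(t) − T_{m−1}[r;0](t) ) dt ], where T_{m−1}[r;0] is the Taylor polynomial of r of degree m−1 at 0. Assume φ exists on (0,1], extends to a continuous function on [0,1], is q-times continuously differentiable on (0,1], and satisfies |φ^{(i)}(x)| ≤ C₀ x^{σ−m+1−i} for i = 1, …, q and all 0 < x ≤ 1, for some constant C₀. Then r is (q+m−1)-times continuously differentiable on (0,1], and there exists a constant C, independent of x, such that for all 0 < x ≤ 1: |r^{(i)}(x)| ≤ C for i = 0, 1, …, m−1, and |r^{(i)}(x)| ≤ C x^{σ−i} for i = m, m+1, …, q+m−1. -/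

import Mathlib

/-- `w = r − T_{m−1}[r;0]`, where `T_{m−1}[r;0]` is the Taylor polynomial of `r` of
degree `m−1` at `0` (computed with derivatives within `[0,1]`). -/
noncomputable def wfun (m : ℕ) (r : ℝ → ℝ) : ℝ → ℝ :=
  fun t => r t - taylorWithinEval r (m - 1) (Set.Icc 0 1) 0 t

/-- `J(x) = (1/Γ(m−σ)) ∫₀ˣ (x-t)^{m−σ−1} w(t) dt`; its `m`-th derivative is the
Caputo fractional derivative `D*^σ r`. -/
noncomputable def Jfun (m : ℕ) (σ : ℝ) (r : ℝ → ℝ) : ℝ → ℝ :=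
  fun x => (1 / Real.Gamma ((m:ℝ) - σ)) *
    ∫ t in (0:ℝ)..x, (x - t) ^ ((m:ℝ) - σ - 1) * wfun m r t

/-!
Write `n = m - 1` and `α = σ - n ∈ (0, 1)`. The Taylor remainder of `r` is the `n`-fold primitive
of `v = r⁽ⁿ⁾ - r⁽ⁿ⁾(0)`, and primitives commute with fractional integrals, so that
`D*^σ r = φ` says `d/dx I^(1-α) v = φ`. Abel inversion, that is the semigroup law
`I^a I^b = I^(a+b)` coming from the beta integral, gives `v = I^α φ`.

The substitution `t = x s` turns `I^α φ` into `x^α / Γ(α) · Nφ(x)` with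
`Nφ(x) = ∫₀¹ (1 - s)^(α-1) φ(x s) ds`. The Euler operator `x d/dx` commutes with `N`, so
induction on the order shows that `N` preserves functions whose `i`-th derivative is `O(x^(-i))`,
and multiplication by `x^α` shifts the exponents by `α`.
-/

open MeasureTheory Set Filter Topology Asymptotics
open scoped Interval

theorem intervalIntegrable_sub_rpow {a : ℝ} (ha : 0 < a) (x y : ℝ) :
    IntervalIntegrable (fun t => (x - t) ^ (a - 1)) volume y x := by
  simpa using (intervalIntegral.intervalIntegrable_rpow' (a := x - y) (b := 0) (r := a - 1)
    (by linarith)).comp_sub_left x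

theorem integral_sub_rpow {a : ℝ} (ha : 0 < a) (x y : ℝ) :
    ∫ t in y..x, (x - t) ^ (a - 1) = (x - y) ^ a / a := by
  rw [intervalIntegral.integral_comp_sub_left (fun t => t ^ (a - 1)) x,
    integral_rpow (Or.inl (by linarith))]
  simp [Real.zero_rpow ha.ne']

theorem integral_rpow_mul_sub_rpow {a b c : ℝ} (ha : 0 < a) (hb : 0 < b) (hc : 0 < c) :
    ∫ t in 0..c, t ^ (a - 1) * (c - t) ^ (b - 1) =
      c ^ (a + b - 1) * ProbabilityTheory.beta a b := by
  have h_ofReal : ((∫ t in 0..c, t ^ (a - 1) * (c - t) ^ (b - 1) : ℝ) : ℂ) =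
      ∫ t in 0..c, (t : ℂ) ^ ((a : ℂ) - 1) * ((c : ℂ) - t) ^ ((b : ℂ) - 1) := by
    rw [← intervalIntegral.integral_ofReal]
    refine intervalIntegral.integral_congr fun t ht => ?_
    rw [uIcc_of_le hc.le] at ht
    push_cast [Complex.ofReal_cpow ht.1, Complex.ofReal_cpow (sub_nonneg.2 ht.2)]
    rfl
  apply Complex.ofReal_injective
  rw [h_ofReal, Complex.betaIntegral_scaled _ _ hc,
    Complex.betaIntegral_eq_Gamma_mul_div _ _ (by simpa) (by simpa), ProbabilityTheory.beta]
  push_cast [Complex.ofReal_cpow hc.le, ← Complex.Gamma_ofReal]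
  rfl

theorem integral_sub_rpow_mul_sub_rpow {a b s x : ℝ} (ha : 0 < a) (hb : 0 < b) (hsx : s < x) :
    ∫ t in s..x, (x - t) ^ (a - 1) * (t - s) ^ (b - 1) =
      (x - s) ^ (a + b - 1) * ProbabilityTheory.beta a b := by
  have h_reflect := intervalIntegral.integral_comp_sub_left (a := s) (b := x)
    (fun t => t ^ (a - 1) * (x - s - t) ^ (b - 1)) x
  rw [sub_self, integral_rpow_mul_sub_rpow ha hb (sub_pos.2 hsx)] at h_reflect
  simpa only [sub_sub_sub_cancel_left] using h_reflect

variable {E : Type*} [NormedAddCommGroup E] [NormedSpace ℝ E]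

theorem integral_integral_triangle_swap {a x : ℝ} (hax : a ≤ x) {F : ℝ → ℝ → E}
    (hF : Integrable ({p : ℝ × ℝ | p.2 ≤ p.1}.indicator (Function.uncurry F))
      ((volume.restrict (Ioc a x)).prod (volume.restrict (Ioc a x)))) :
    ∫ t in a..x, ∫ s in a..t, F t s = ∫ s in a..x, ∫ t in s..x, F t s := by
  have h_inner_left : ∀ t ∈ Ioc a x,
      ∫ s in a..t, F t s = ∫ s in Ioc a x, (Iic t).indicator (F t) s := fun t ht => by
    rw [integral_indicator measurableSet_Iic, Measure.restrict_restrict measurableSet_Iic,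
      inter_comm, Ioc_inter_Iic, min_eq_right ht.2, intervalIntegral.integral_of_le ht.1.le]
  have h_inner_right : ∀ s ∈ Ioc a x,
      ∫ t in s..x, F t s = ∫ t in Ioc a x, (Ici s).indicator (F · s) t := fun s hs => by
    rw [integral_indicator measurableSet_Ici, integral_Ici_eq_integral_Ioi,
      Measure.restrict_restrict measurableSet_Ioi, inter_comm, Ioc_inter_Ioi,
      max_eq_right hs.1.le, intervalIntegral.integral_of_le hs.2]
  rw [intervalIntegral.integral_of_le hax, intervalIntegral.integral_of_le hax,
    setIntegral_congr_fun measurableSet_Ioc h_inner_left,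
    setIntegral_congr_fun measurableSet_Ioc h_inner_right]
  exact integral_integral_swap (f := fun t s => (Iic t).indicator (F t) s) hF

theorem integrable_triangle_sub_rpow_mul_sub_rpow {a b x : ℝ} (ha : 0 < a) (hb : 0 < b)
    (hx : 0 ≤ x) :
    Integrable ({p : ℝ × ℝ | p.2 ≤ p.1}.indicator
        fun p => (x - p.1) ^ (a - 1) * (p.1 - p.2) ^ (b - 1))
      ((volume.restrict (Ioc 0 x)).prod (volume.restrict (Ioc 0 x))) := by
  have h_meas : Measurable ({p : ℝ × ℝ | p.2 ≤ p.1}.indicator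
      fun p => (x - p.1) ^ (a - 1) * (p.1 - p.2) ^ (b - 1)) :=
    Measurable.indicator (by fun_prop) (measurableSet_le measurable_snd measurable_fst)
  have h_slice : ∀ t, (fun s => {p : ℝ × ℝ | p.2 ≤ p.1}.indicator
      (fun p => (x - p.1) ^ (a - 1) * (p.1 - p.2) ^ (b - 1)) (t, s)) =
      (Iic t).indicator fun s => (x - t) ^ (a - 1) * (t - s) ^ (b - 1) := fun t => rfl
  refine (integrable_prod_iff h_meas.aestronglyMeasurable).2 ⟨?_, ?_⟩
  · filter_upwards [ae_restrict_mem measurableSet_Ioc] with t ht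
    rw [h_slice, integrable_indicator_iff measurableSet_Iic, IntegrableOn,
      Measure.restrict_restrict measurableSet_Iic, inter_comm, Ioc_inter_Iic, min_eq_right ht.2]
    exact (intervalIntegrable_iff_integrableOn_Ioc_of_le ht.1.le).1
      ((intervalIntegrable_sub_rpow hb t 0).const_mul _)
  · have h_int : IntervalIntegrable (fun t => (x - t) ^ (a - 1) * (t ^ b / b)) volume 0 x :=
      (intervalIntegrable_sub_rpow ha x 0).mul_continuousOn
        ((continuousOn_id.rpow_const fun _ _ => Or.inr hb.le).div_const b)
    refine ((intervalIntegrable_iff_integrableOn_Ioc_of_le hx).1 h_int).congr ?_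
    filter_upwards [ae_restrict_mem measurableSet_Ioc] with t ht
    have h_nonneg : ∀ s, 0 ≤ {p : ℝ × ℝ | p.2 ≤ p.1}.indicator
        (fun p => (x - p.1) ^ (a - 1) * (p.1 - p.2) ^ (b - 1)) (t, s) := fun s =>
      indicator_apply_nonneg fun hst => mul_nonneg (Real.rpow_nonneg (sub_nonneg.2 ht.2) _)
        (Real.rpow_nonneg (sub_nonneg.2 hst) _)
    simp only [Real.norm_of_nonneg (h_nonneg _)]
    rw [h_slice, integral_indicator measurableSet_Iic,
      Measure.restrict_restrict measurableSet_Iic, inter_comm, Ioc_inter_Iic, min_eq_right ht.2,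
      ← intervalIntegral.integral_of_le ht.1.le,
      intervalIntegral.integral_const_mul, integral_sub_rpow hb, sub_zero]

/-- The Riemann–Liouville fractional integral
`I^a f (x) = (1 / Γ(a)) ∫₀ˣ (x - t)^(a - 1) f(t) dt` with base point `0`. It is meant for `0 < a`
and `0 ≤ x`; for `a = 0` it is the zero function, not `f`, because `Γ(0) = 0` in Mathlib. -/
noncomputable def rlIntegral (a : ℝ) (f : ℝ → E) (x : ℝ) : E :=
  (Real.Gamma a)⁻¹ • ∫ t in 0..x, (x - t) ^ (a - 1) • f t

theorem rlIntegral_apply_zero (a : ℝ) (f : ℝ → E) : rlIntegral a f 0 = 0 := by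
  simp [rlIntegral]

theorem rlIntegral_one (f : ℝ → E) (x : ℝ) : rlIntegral 1 f x = ∫ t in 0..x, f t := by
  simp [rlIntegral]

theorem rlIntegral_congr {b : ℝ} (a : ℝ) {f g : ℝ → E} (h : EqOn f g (Icc 0 b)) :
    EqOn (rlIntegral a f) (rlIntegral a g) (Icc 0 b) := fun x hx => by
  refine congrArg _ (intervalIntegral.integral_congr fun t ht => ?_)
  rw [uIcc_of_le hx.1] at ht
  exact congrArg _ (h ⟨ht.1, ht.2.trans hx.2⟩)

theorem integrable_triangle_sub_rpow_smul {a b x : ℝ} (ha : 0 < a) (hb : 0 < b) (hx : 0 ≤ x)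
    {f : ℝ → E} (hf : ContinuousOn f (Icc 0 x)) :
    Integrable ({p : ℝ × ℝ | p.2 ≤ p.1}.indicator (Function.uncurry
        fun t s => ((x - t) ^ (a - 1) * (t - s) ^ (b - 1)) • f s))
      ((volume.restrict (Ioc 0 x)).prod (volume.restrict (Ioc 0 x))) := by
  obtain ⟨M, hM⟩ := isCompact_Icc.exists_bound_of_continuousOn hf
  have h_meas : AEStronglyMeasurable f (volume.restrict (Ioc 0 x)) :=
    (hf.mono Ioc_subset_Icc_self).aestronglyMeasurable measurableSet_Ioc
  have h_bound : ∀ᵐ s ∂volume.restrict (Ioc 0 x), ‖f s‖ ≤ M :=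
    (ae_restrict_mem measurableSet_Ioc).mono fun s hs => hM s (Ioc_subset_Icc_self hs)
  refine ((integrable_triangle_sub_rpow_mul_sub_rpow ha hb hx).smul_bdd M h_meas.comp_snd
    (Measure.quasiMeasurePreserving_snd.ae h_bound)).congr (.of_forall fun p => ?_)
  exact (indicator_smul_apply_left _ _ (fun p : ℝ × ℝ => f p.2) p).symm

theorem rlIntegral_rlIntegral [CompleteSpace E] {a b x : ℝ} (ha : 0 < a) (hb : 0 < b)
    (hx : 0 ≤ x) {f : ℝ → E} (hf : ContinuousOn f (Icc 0 x)) :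
    rlIntegral a (rlIntegral b f) x = rlIntegral (a + b) f x := by
  have h_swap := integral_integral_triangle_swap hx (integrable_triangle_sub_rpow_smul ha hb hx hf)
  have h_right : ∫ s in 0..x, ∫ t in s..x, ((x - t) ^ (a - 1) * (t - s) ^ (b - 1)) • f s =
      ProbabilityTheory.beta a b • ∫ s in 0..x, (x - s) ^ (a + b - 1) • f s := by
    rw [← intervalIntegral.integral_smul]
    refine intervalIntegral.integral_congr_Ioo_of_le hx fun s hs => ?_
    rw [intervalIntegral.integral_smul_const, integral_sub_rpow_mul_sub_rpow ha hb hs.2, mul_comm,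
      mul_smul]
  have h_left : ∫ t in 0..x, (x - t) ^ (a - 1) • rlIntegral b f t =
      (Real.Gamma b)⁻¹ • ∫ t in 0..x, ∫ s in 0..t,
        ((x - t) ^ (a - 1) * (t - s) ^ (b - 1)) • f s := by
    simp only [rlIntegral, mul_smul, intervalIntegral.integral_smul]
    simp only [smul_comm _ (Real.Gamma b)⁻¹, intervalIntegral.integral_smul]
  rw [rlIntegral, h_left, h_swap, h_right, rlIntegral, smul_smul, smul_smul,
    ProbabilityTheory.beta]
  have := (Real.Gamma_pos_of_pos ha).ne'
  have := (Real.Gamma_pos_of_pos hb).ne'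
  congr 1
  field_simp

section Primitive

variable [CompleteSpace E] {b : ℝ} {f : ℝ → E}

theorem hasDerivWithinAt_rlIntegral_one (hf : ContinuousOn f (Icc 0 b)) {x : ℝ}
    (hx : x ∈ Icc 0 b) : HasDerivWithinAt (rlIntegral 1 f) (f x) (Icc 0 b) x := by
  have : Fact (x ∈ Icc 0 b) := ⟨hx⟩
  rw [funext (rlIntegral_one f)]
  exact intervalIntegral.integral_hasDerivWithinAt_right
    ((hf.mono (Icc_subset_Icc_right hx.2)).intervalIntegrable_of_Icc hx.1)
    (hf.stronglyMeasurableAtFilter_nhdsWithin measurableSet_Icc x) (hf x hx)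

theorem continuousOn_iterate_rlIntegral_one (n : ℕ) (hf : ContinuousOn f (Icc 0 b)) :
    ContinuousOn ((rlIntegral 1)^[n] f) (Icc 0 b) := by
  induction n with
  | zero => exact hf
  | succ n ih =>
    rw [Function.iterate_succ_apply']
    exact fun x hx => (hasDerivWithinAt_rlIntegral_one ih hx).continuousWithinAt

theorem iteratedDerivWithin_iterate_rlIntegral_one (hb : 0 < b) (n : ℕ)
    (hf : ContinuousOn f (Icc 0 b)) :
    EqOn (iteratedDerivWithin n ((rlIntegral 1)^[n] f) (Icc 0 b)) f (Icc 0 b) := by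
  induction n with
  | zero => exact fun x _ => by simp
  | succ n ih =>
    refine fun x hx => Eq.trans ?_ (ih hx)
    rw [iteratedDerivWithin_succ', Function.iterate_succ_apply']
    refine iteratedDerivWithin_congr (fun y hy => ?_) hx
    exact (hasDerivWithinAt_rlIntegral_one (continuousOn_iterate_rlIntegral_one n hf)
      hy).derivWithin (uniqueDiffOn_Icc hb y hy)

theorem eqOn_rlIntegral_one_of_hasDerivAt {g : ℝ → E} (hg : ContinuousOn g (Icc 0 b))
    (hf : ContinuousOn f (Icc 0 b)) (hderiv : ∀ x ∈ Ioo 0 b, HasDerivAt g (f x) x)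
    (hg0 : g 0 = 0) : EqOn g (rlIntegral 1 f) (Icc 0 b) := fun x hx => by
  have h_subset : Icc 0 x ⊆ Icc 0 b := Icc_subset_Icc_right hx.2
  rw [rlIntegral_one, intervalIntegral.integral_eq_sub_of_hasDerivAt_of_le hx.1
    (hg.mono h_subset) (fun y hy => hderiv y ⟨hy.1, hy.2.trans_le hx.2⟩)
    ((hf.mono h_subset).intervalIntegrable_of_Icc hx.1), hg0, sub_zero]

theorem sub_taylorWithinEval_eqOn_iterate_rlIntegral_one (hb : 0 < b) (n : ℕ)
    (hf : ContDiffOn ℝ n f (Icc 0 b)) :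
    EqOn (fun t => f t - taylorWithinEval f n (Icc 0 b) 0 t)
      ((rlIntegral 1)^[n] fun t =>
        iteratedDerivWithin n f (Icc 0 b) t - iteratedDerivWithin n f (Icc 0 b) 0)
      (Icc 0 b) := by
  have h_unique : UniqueDiffOn ℝ (Icc 0 b) := uniqueDiffOn_Icc hb
  induction n generalizing f with
  | zero => exact fun x _ => by simp
  | succ n ih =>
    have h_deriv : ∀ x ∈ Icc 0 b,
        HasDerivWithinAt (fun t => f t - taylorWithinEval f (n + 1) (Icc 0 b) 0 t)
          (derivWithin f (Icc 0 b) x -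
            taylorWithinEval (derivWithin f (Icc 0 b)) n (Icc 0 b) 0 x) (Icc 0 b) x :=
      fun x hx => (hf.differentiableOn (by simp) x hx).hasDerivWithinAt.sub
        (hasDerivAt_taylorWithinEval_succ f n).hasDerivWithinAt
    have ih' := ih (hf.derivWithin h_unique (by norm_cast))
    simp only [← iteratedDerivWithin_succ'] at ih'
    have h_cont : ContinuousOn (fun t => iteratedDerivWithin (n + 1) f (Icc 0 b) t -
        iteratedDerivWithin (n + 1) f (Icc 0 b) 0) (Icc 0 b) :=
      (hf.continuousOn_iteratedDerivWithin le_rfl h_unique).sub continuousOn_const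
    rw [Function.iterate_succ_apply']
    exact (eqOn_rlIntegral_one_of_hasDerivAt (fun x hx => (h_deriv x hx).continuousWithinAt)
      ((continuousOn_iterate_rlIntegral_one n h_cont).congr ih')
      (fun x hx => (h_deriv x (Ioo_subset_Icc_self hx)).hasDerivAt (Icc_mem_nhds hx.1 hx.2))
      (by simp)).trans (rlIntegral_congr 1 ih')

theorem rlIntegral_comm {a c : ℝ} (ha : 0 < a) (hc : 0 < c) (hf : ContinuousOn f (Icc 0 b)) :
    EqOn (rlIntegral a (rlIntegral c f)) (rlIntegral c (rlIntegral a f)) (Icc 0 b) :=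
  fun x hx => by
    have h_cont := hf.mono (Icc_subset_Icc_right hx.2)
    rw [rlIntegral_rlIntegral ha hc hx.1 h_cont, rlIntegral_rlIntegral hc ha hx.1 h_cont, add_comm]

theorem rlIntegral_iterate_rlIntegral_one {a : ℝ} (ha : 0 < a) (n : ℕ)
    (hf : ContinuousOn f (Icc 0 b)) :
    EqOn (rlIntegral a ((rlIntegral 1)^[n] f)) ((rlIntegral 1)^[n] (rlIntegral a f))
      (Icc 0 b) := by
  induction n with
  | zero => exact fun x _ => rfl
  | succ n ih =>
    simp only [Function.iterate_succ_apply']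
    exact (rlIntegral_comm ha one_pos (continuousOn_iterate_rlIntegral_one n hf)).trans
      (rlIntegral_congr 1 ih)

end Primitive

/-- The integral of the dilates `s ↦ p (x s)` over `[0, 1]` against the (unnormalised) beta weight
`(1 - s)^(α - 1)`. Up to the factor `x^α / Γ(α)` it is the fractional integral of `p`, rescaled so
that the domain of integration and the singularity no longer depend on `x`. -/
noncomputable def betaAverage (α : ℝ) (p : ℝ → E) (x : ℝ) : E :=
  ∫ s in 0..1, (1 - s) ^ (α - 1) • p (x * s)

section BetaAverage

variable {α K : ℝ} {p : ℝ → E} {S : Set ℝ}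

theorem rlIntegral_eq_rpow_smul_betaAverage (hα : 0 < α) (f : ℝ → E) {x : ℝ} (hx : 0 ≤ x) :
    rlIntegral α f x = (Real.Gamma α)⁻¹ • x ^ α • betaAverage α f x := by
  rcases hx.eq_or_lt with rfl | hx
  · simp [rlIntegral_apply_zero, Real.zero_rpow hα.ne']
  have h_subst := intervalIntegral.smul_integral_comp_mul_left (a := 0) (b := 1)
    (fun t => (x - t) ^ (α - 1) • f t) x
  rw [mul_zero, mul_one] at h_subst
  have h_scale : ∀ s ∈ [[0, 1]],
      (x - x * s) ^ (α - 1) • f (x * s) = x ^ (α - 1) • (1 - s) ^ (α - 1) • f (x * s) :=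
    fun s hs => by
      rw [uIcc_of_le zero_le_one] at hs
      rw [smul_smul, ← Real.mul_rpow hx.le (sub_nonneg.2 hs.2), mul_one_sub]
  rw [rlIntegral, ← h_subst, intervalIntegral.integral_congr h_scale,
    intervalIntegral.integral_smul, smul_smul x, mul_comm x, ← Real.rpow_add_one hx.ne',
    sub_add_cancel, betaAverage]

theorem norm_betaAverage_integrand_le (hpK : ∀ y ∈ S, ‖p y‖ ≤ K) {x s : ℝ}
    (hs : s ∈ Ioc 0 1) (hxs : x * s ∈ S) :
    ‖(1 - s) ^ (α - 1) • p (x * s)‖ ≤ (1 - s) ^ (α - 1) * K := by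
  have h_nonneg : 0 ≤ (1 - s) ^ (α - 1) := Real.rpow_nonneg (sub_nonneg.2 hs.2) _
  rw [norm_smul, Real.norm_of_nonneg h_nonneg]
  exact mul_le_mul_of_nonneg_left (hpK _ hxs) h_nonneg

theorem aestronglyMeasurable_betaAverage_integrand (α : ℝ) (hp : ContinuousOn p S) {x : ℝ}
    (hxS : MapsTo (x * ·) (Ioc 0 1) S) :
    AEStronglyMeasurable (fun s => (1 - s) ^ (α - 1) • p (x * s)) (volume.restrict (Ι 0 1)) := by
  rw [uIoc_of_le zero_le_one]
  exact (Measurable.aestronglyMeasurable (by fun_prop)).smul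
    ((hp.comp (by fun_prop) hxS).aestronglyMeasurable measurableSet_Ioc)

theorem intervalIntegrable_betaAverage_integrand (hα : 0 < α) (hp : ContinuousOn p S)
    (hpK : ∀ y ∈ S, ‖p y‖ ≤ K) {x : ℝ} (hxS : MapsTo (x * ·) (Ioc 0 1) S) :
    IntervalIntegrable (fun s => (1 - s) ^ (α - 1) • p (x * s)) volume 0 1 := by
  refine ((intervalIntegrable_sub_rpow hα 1 0).mul_const K).mono_fun'
    (aestronglyMeasurable_betaAverage_integrand α hp hxS) ?_
  rw [uIoc_of_le zero_le_one]
  exact (ae_restrict_mem measurableSet_Ioc).mono fun s hs =>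
    norm_betaAverage_integrand_le hpK hs (hxS hs)

theorem norm_betaAverage_le (hα : 0 < α) (hpK : ∀ y ∈ S, ‖p y‖ ≤ K) {x : ℝ}
    (hxS : MapsTo (x * ·) (Ioc 0 1) S) : ‖betaAverage α p x‖ ≤ K / α := by
  calc ‖betaAverage α p x‖ ≤ ∫ s in 0..1, (1 - s) ^ (α - 1) * K :=
        intervalIntegral.norm_integral_le_of_norm_le zero_le_one
          (ae_of_all _ fun s hs => norm_betaAverage_integrand_le hpK hs (hxS hs))
          ((intervalIntegrable_sub_rpow hα 1 0).mul_const K)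
    _ = K / α := by
        rw [intervalIntegral.integral_mul_const, integral_sub_rpow hα, sub_zero, Real.one_rpow,
          one_div_mul_eq_div]

theorem continuousOn_betaAverage (hα : 0 < α) (hS : ∀ x ∈ S, MapsTo (x * ·) (Ioc 0 1) S)
    (hp : ContinuousOn p S) (hpK : ∀ y ∈ S, ‖p y‖ ≤ K) : ContinuousOn (betaAverage α p) S := by
  refine fun x hx => intervalIntegral.continuousWithinAt_of_dominated_interval
    (bound := fun s => (1 - s) ^ (α - 1) * K) ?_ ?_
    ((intervalIntegrable_sub_rpow hα 1 0).mul_const K) (ae_of_all _ fun s hs => ?_)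
  · filter_upwards [self_mem_nhdsWithin] with y hy
    exact aestronglyMeasurable_betaAverage_integrand α hp (hS y hy)
  · filter_upwards [self_mem_nhdsWithin] with y hy
    refine ae_of_all _ fun s hs => ?_
    rw [uIoc_of_le zero_le_one] at hs
    exact norm_betaAverage_integrand_le hpK hs (hS y hy hs)
  · rw [uIoc_of_le zero_le_one] at hs
    exact continuousWithinAt_const.smul <| (hp _ (hS x hx hs)).comp (f := (· * s))
      (by fun_prop) fun y hy => hS y hy hs

theorem mapsTo_mul_left_Ioc {b x : ℝ} (hx : x ∈ Ioc 0 b) :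
    MapsTo (x * ·) (Ioc 0 1) (Ioc 0 b) := fun _ hs =>
  ⟨mul_pos hx.1 hs.1, (mul_le_of_le_one_right hx.1.le hs.2).trans hx.2⟩

theorem mapsTo_mul_left_Icc {b x : ℝ} (hx : x ∈ Icc 0 b) :
    MapsTo (x * ·) (Ioc 0 1) (Icc 0 b) := fun _ hs =>
  ⟨mul_nonneg hx.1 hs.1.le, (mul_le_of_le_one_right hx.1 hs.2).trans hx.2⟩

theorem continuousOn_rlIntegral {b : ℝ} (hα : 0 < α) (hp : ContinuousOn p (Icc 0 b)) :
    ContinuousOn (rlIntegral α p) (Icc 0 b) := by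
  obtain ⟨K, hK⟩ := isCompact_Icc.exists_bound_of_continuousOn hp
  refine ContinuousOn.congr (continuousOn_const.smul (ContinuousOn.smul ?_ ?_))
    fun x hx => rlIntegral_eq_rpow_smul_betaAverage hα p hx.1
  · exact continuousOn_id.rpow_const fun _ _ => Or.inr hα.le
  · exact continuousOn_betaAverage hα (fun _ => mapsTo_mul_left_Icc) hp hK

end BetaAverage

section Abel

variable [CompleteSpace E] {b : ℝ}

theorem iteratedDerivWithin_rlIntegral_sub_taylorWithinEval (hb : 0 < b) {a : ℝ} (ha : 0 < a)
    {n : ℕ} {r : ℝ → E} (hr : ContDiffOn ℝ n r (Icc 0 b)) :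
    EqOn (iteratedDerivWithin n
        (rlIntegral a fun t => r t - taylorWithinEval r n (Icc 0 b) 0 t) (Icc 0 b))
      (rlIntegral a fun t =>
        iteratedDerivWithin n r (Icc 0 b) t - iteratedDerivWithin n r (Icc 0 b) 0)
      (Icc 0 b) := by
  have h_cont : ContinuousOn (fun t =>
      iteratedDerivWithin n r (Icc 0 b) t - iteratedDerivWithin n r (Icc 0 b) 0) (Icc 0 b) :=
    (hr.continuousOn_iteratedDerivWithin le_rfl (uniqueDiffOn_Icc hb)).sub continuousOn_const
  have h_iterate := (rlIntegral_congr a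
    (sub_taylorWithinEval_eqOn_iterate_rlIntegral_one hb n hr)).trans
      (rlIntegral_iterate_rlIntegral_one ha n h_cont)
  exact fun x hx => (iteratedDerivWithin_congr h_iterate hx).trans
    (iteratedDerivWithin_iterate_rlIntegral_one hb n (continuousOn_rlIntegral ha h_cont) hx)

theorem eqOn_rlIntegral_of_hasDerivAt_rlIntegral (hb : 0 < b) {α : ℝ} (hα0 : 0 < α) (hα1 : α < 1)
    {v φ : ℝ → E} (hv : ContinuousOn v (Icc 0 b)) (hφ : ContinuousOn φ (Icc 0 b))
    (hderiv : ∀ x ∈ Ioo 0 b, HasDerivAt (rlIntegral (1 - α) v) (φ x) x) :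
    EqOn v (rlIntegral α φ) (Icc 0 b) := by
  have hα1' : 0 < 1 - α := sub_pos.2 hα1
  have h_primitive : EqOn (rlIntegral (1 - α) v) (rlIntegral 1 φ) (Icc 0 b) :=
    eqOn_rlIntegral_one_of_hasDerivAt (continuousOn_rlIntegral hα1' hv) hφ hderiv
      (rlIntegral_apply_zero _ _)
  have h_integrated : EqOn (rlIntegral 1 v) (rlIntegral 1 (rlIntegral α φ)) (Icc 0 b) :=
    fun x hx => by
      calc rlIntegral 1 v x = rlIntegral α (rlIntegral (1 - α) v) x := by
            rw [rlIntegral_rlIntegral hα0 hα1' hx.1 (hv.mono (Icc_subset_Icc_right hx.2)),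
              add_sub_cancel]
        _ = rlIntegral α (rlIntegral 1 φ) x := rlIntegral_congr α h_primitive hx
        _ = rlIntegral 1 (rlIntegral α φ) x := rlIntegral_comm hα0 one_pos hφ hx
  exact fun x hx => (uniqueDiffOn_Icc hb x hx).eq_deriv _ (hasDerivWithinAt_rlIntegral_one hv hx)
    ((hasDerivWithinAt_rlIntegral_one (continuousOn_rlIntegral hα0 hφ) hx).congr h_integrated
      (h_integrated hx))

end Abel

section Derivatives

variable {b : ℝ}

theorem hasDerivWithinAt_Ioc_of_hasDerivAt_Ioo {a : ℝ} {f f' : ℝ → E}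
    (hf : ContinuousOn f (Ioc a b)) (hf' : ContinuousOn f' (Ioc a b))
    (hderiv : ∀ x ∈ Ioo a b, HasDerivAt f (f' x) x) {x : ℝ} (hx : x ∈ Ioc a b) :
    HasDerivWithinAt f (f' x) (Ioc a b) x := by
  rcases hx.2.lt_or_eq with hxb | rfl
  · exact (hderiv x ⟨hx.1, hxb⟩).hasDerivWithinAt
  have h_limit : Tendsto f' (𝓝[<] x) (𝓝 (f' x)) := by
    rw [← nhdsWithin_Ioo_eq_nhdsLT hx.1]
    exact (hf' x hx).mono Ioo_subset_Ioc_self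
  refine (hasDerivWithinAt_Iic_of_tendsto_deriv
    (fun y hy => (hderiv y hy).differentiableAt.differentiableWithinAt)
    ((hf x hx).mono Ioo_subset_Ioc_self) (Ioo_mem_nhdsLT hx.1)
    (h_limit.congr' ?_)).mono Ioc_subset_Iic_self
  filter_upwards [Ioo_mem_nhdsLT hx.1] with y hy
  exact (hderiv y hy).deriv.symm

theorem hasDerivAt_betaAverage {α K K' : ℝ} {p p' : ℝ → E} (hα : 0 < α)
    (hp : ContinuousOn p (Ioc 0 b)) (hpK : ∀ y ∈ Ioc 0 b, ‖p y‖ ≤ K)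
    (hp' : ContinuousOn p' (Ioc 0 b)) (hp'K : ∀ y ∈ Ioc 0 b, ‖y • p' y‖ ≤ K')
    (hderiv : ∀ y ∈ Ioo 0 b, HasDerivAt p (p' y) y) {x : ℝ} (hx : x ∈ Ioo 0 b) :
    HasDerivAt (betaAverage α p) (x⁻¹ • betaAverage α (fun y => y • p' y) x) x := by
  have h_nhds : Ioo (x / 2) b ∈ 𝓝 x := Ioo_mem_nhds (half_lt_self hx.1) hx.2
  have h_pos : ∀ y ∈ Ioo (x / 2) b, 0 < y := fun y hy => (half_pos hx.1).trans hy.1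
  have h_mapsTo : ∀ y ∈ Ioo (x / 2) b, MapsTo (y * ·) (Ioc 0 1) (Ioc 0 b) := fun y hy =>
    mapsTo_mul_left_Ioc ⟨h_pos y hy, hy.2.le⟩
  have hx_mapsTo := h_mapsTo x (mem_of_mem_nhds h_nhds)
  have h_main := intervalIntegral.hasDerivAt_integral_of_dominated_loc_of_deriv_le
    (F := fun y s => (1 - s) ^ (α - 1) • p (y * s))
    (F' := fun y s => y⁻¹ • (1 - s) ^ (α - 1) • (y * s) • p' (y * s))
    (bound := fun s => (x / 2)⁻¹ * ((1 - s) ^ (α - 1) * K')) h_nhds ?_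
    (intervalIntegrable_betaAverage_integrand hα hp hpK hx_mapsTo)
    ((aestronglyMeasurable_betaAverage_integrand α (continuousOn_id.smul hp')
      hx_mapsTo).const_smul x⁻¹)
    (ae_of_all _ fun s hs y hy => ?_)
    (((intervalIntegrable_sub_rpow hα 1 0).mul_const K').const_mul _)
    (ae_of_all _ fun s hs y hy => ?_)
  · rw [betaAverage, ← intervalIntegral.integral_smul]
    exact h_main.2
  · filter_upwards [h_nhds] with y hy
    exact aestronglyMeasurable_betaAverage_integrand α hp (h_mapsTo y hy)
  · rw [uIoc_of_le zero_le_one] at hs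
    rw [norm_smul, norm_inv, Real.norm_of_nonneg (h_pos y hy).le]
    exact mul_le_mul (inv_anti₀ (half_pos hx.1) hy.1.le)
      (norm_betaAverage_integrand_le (p := fun y => y • p' y) hp'K hs (h_mapsTo y hy hs))
      (norm_nonneg _) (inv_nonneg.2 (half_pos hx.1).le)
  · rw [uIoc_of_le zero_le_one] at hs
    have hys : y * s ∈ Ioo 0 b :=
      ⟨mul_pos (h_pos y hy) hs.1, (mul_le_of_le_one_right (h_pos y hy).le hs.2).trans_lt hy.2⟩
    convert! ((hderiv _ hys).scomp y (hasDerivAt_mul_const s)).const_smul ((1 - s) ^ (α - 1))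
      using 1
    rw [mul_smul y s, smul_comm _ y, inv_smul_smul₀ (h_pos y hy).ne']

theorem hasDerivWithinAt_betaAverage {α K K' : ℝ} {p p' : ℝ → E} (hα : 0 < α)
    (hp : ContinuousOn p (Ioc 0 b)) (hpK : ∀ y ∈ Ioc 0 b, ‖p y‖ ≤ K)
    (hp' : ContinuousOn p' (Ioc 0 b)) (hp'K : ∀ y ∈ Ioc 0 b, ‖y • p' y‖ ≤ K')
    (hderiv : ∀ y ∈ Ioo 0 b, HasDerivAt p (p' y) y) {x : ℝ} (hx : x ∈ Ioc 0 b) :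
    HasDerivWithinAt (betaAverage α p) (x⁻¹ • betaAverage α (fun y => y • p' y) x)
      (Ioc 0 b) x :=
  hasDerivWithinAt_Ioc_of_hasDerivAt_Ioo
    (continuousOn_betaAverage hα (fun _ => mapsTo_mul_left_Ioc) hp hpK)
    ((continuousOn_inv₀.mono fun _ hy => hy.1.ne').smul (continuousOn_betaAverage hα
      (fun _ => mapsTo_mul_left_Ioc) (continuousOn_id.smul hp') hp'K))
    (fun _ => hasDerivAt_betaAverage hα hp hpK hp' hp'K hderiv) hx

end Derivatives

/-- The class of `q` times continuously differentiable functions on `(0, b]` whose `i`-th derivative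
is `O(x ^ (γ - i))` there for all `i ≤ q`: the derivatives behave like those of `x ^ γ`. Derivatives
are taken within `(0, b]`, and the estimates are uniform on `(0, b]`, not merely as `x → 0`. -/
structure WeightedContDiff (q : ℕ) (γ b : ℝ) (f : ℝ → E) : Prop where
  contDiffOn : ContDiffOn ℝ q f (Ioc 0 b)
  isBigO : ∀ i ≤ q, iteratedDerivWithin i f (Ioc 0 b) =O[𝓟 (Ioc 0 b)] fun x => x ^ (γ - i)

namespace WeightedContDiff

variable {q : ℕ} {b γ δ : ℝ} {f g : ℝ → E} {c : ℝ → ℝ}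

theorem congr (hf : WeightedContDiff q γ b f) (hfg : EqOn g f (Ioc 0 b)) :
    WeightedContDiff q γ b g where
  contDiffOn := hf.contDiffOn.congr hfg
  isBigO i hi := (hf.isBigO i hi).congr'
    (eventually_principal.2 fun _ hx => (iteratedDerivWithin_congr hfg hx).symm) .rfl

theorem const_smul (hf : WeightedContDiff q γ b f) (k : ℝ) :
    WeightedContDiff q γ b fun x => k • f x where
  contDiffOn := contDiffOn_const.smul hf.contDiffOn
  isBigO i hi := ((hf.isBigO i hi).const_smul_left k).congr_left fun _ =>
    (iteratedDerivWithin_fun_const_smul_field k f).symm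

theorem isBigO_rpow (hf : WeightedContDiff q γ b f) : f =O[𝓟 (Ioc 0 b)] fun x => x ^ γ := by
  simpa using hf.isBigO 0 q.zero_le

theorem succ_iff : WeightedContDiff (q + 1) γ b f ↔
    DifferentiableOn ℝ f (Ioc 0 b) ∧ f =O[𝓟 (Ioc 0 b)] (fun x => x ^ γ) ∧
      WeightedContDiff q (γ - 1) b (derivWithin f (Ioc 0 b)) := by
  have h_exponent : ∀ i : ℕ, γ - (i + 1 : ℕ) = γ - 1 - i := fun i => by push_cast; ring
  have h_contDiffOn := contDiffOn_succ_iff_derivWithin (𝕜 := ℝ) (n := q) (f := f)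
    (uniqueDiffOn_Ioc 0 b)
  constructor
  · intro hf
    obtain ⟨h_diff, -, h_deriv⟩ := h_contDiffOn.1 (mod_cast hf.contDiffOn)
    refine ⟨h_diff, hf.isBigO_rpow, h_deriv, fun i hi => ?_⟩
    simpa only [iteratedDerivWithin_succ', h_exponent] using hf.isBigO (i + 1) (by lia)
  · rintro ⟨h_diff, h_isBigO, h_deriv⟩
    refine ⟨mod_cast h_contDiffOn.2 ⟨h_diff, by simp, h_deriv.contDiffOn⟩, fun i hi => ?_⟩
    cases i with
    | zero => simpa using h_isBigO
    | succ i =>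
      simpa only [iteratedDerivWithin_succ', h_exponent] using h_deriv.isBigO i (by lia)

theorem rpow (q : ℕ) (γ b : ℝ) : WeightedContDiff q γ b fun x : ℝ => x ^ γ := by
  induction q generalizing γ with
  | zero =>
    refine ⟨ContDiffOn.rpow_const_of_ne contDiffOn_id fun x hx => hx.1.ne', fun i hi => ?_⟩
    simpa [Nat.le_zero.1 hi] using isBigO_refl _ _
  | succ q ih =>
    have h_deriv : ∀ x ∈ Ioc 0 b,
        HasDerivWithinAt (fun x : ℝ => x ^ γ) (γ * x ^ (γ - 1)) (Ioc 0 b) x := fun x hx =>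
      (Real.hasDerivAt_rpow_const (Or.inl hx.1.ne')).hasDerivWithinAt
    exact succ_iff.2 ⟨fun x hx => (h_deriv x hx).differentiableWithinAt, isBigO_refl _ _,
      ((ih (γ - 1)).const_smul γ).congr fun x hx =>
        (h_deriv x hx).derivWithin (uniqueDiffOn_Ioc 0 b x hx)⟩

theorem smul (hc : WeightedContDiff q γ b c) (hf : WeightedContDiff q δ b f) :
    WeightedContDiff q (γ + δ) b fun x => c x • f x where
  contDiffOn := hc.contDiffOn.smul hf.contDiffOn
  isBigO i hi := by
    have h_leibniz : iteratedDerivWithin i (fun x => c x • f x) (Ioc 0 b) =O[𝓟 (Ioc 0 b)]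
        fun x => ∑ j ∈ Finset.range (i + 1), (i.choose j : ℝ) *
          ‖iteratedDerivWithin j c (Ioc 0 b) x‖ * ‖iteratedDerivWithin (i - j) f (Ioc 0 b) x‖ := by
      refine .of_norm_eventuallyLE (eventually_principal.2 fun x hx => ?_)
      simpa only [norm_iteratedFDerivWithin_eq_norm_iteratedDerivWithin] using
        norm_iteratedFDerivWithin_smul_le hc.contDiffOn hf.contDiffOn (uniqueDiffOn_Ioc 0 b) hx
          (n := i) (mod_cast hi)
    refine h_leibniz.trans (IsBigO.fun_sum fun j hj => ?_)
    have hji : j ≤ i := Finset.mem_range_succ_iff.1 hj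
    refine (((hc.isBigO j (hji.trans hi)).norm_left.const_mul_left _).mul
      (hf.isBigO (i - j) ((i.sub_le j).trans hi)).norm_left).congr' .rfl
      (eventually_principal.2 fun x hx => ?_)
    dsimp only
    rw [← Real.rpow_add hx.1, Nat.cast_sub hji]
    ring_nf

theorem exists_norm_le (hf : WeightedContDiff q 0 b f) : ∃ K, ∀ x ∈ Ioc 0 b, ‖f x‖ ≤ K := by
  simpa only [Real.rpow_zero, norm_one, mul_one] using isBigO_principal.1 hf.isBigO_rpow

theorem betaAverage {α : ℝ} (hα : 0 < α) (hf : WeightedContDiff q 0 b f) :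
    WeightedContDiff q 0 b (betaAverage α f) := by
  have h_bounded : ∀ {g : ℝ → E} {K : ℝ}, (∀ x ∈ Ioc 0 b, ‖g x‖ ≤ K) →
      _root_.betaAverage α g =O[𝓟 (Ioc 0 b)] fun x => x ^ (0 : ℝ) := fun hK => by
    simp only [Real.rpow_zero]
    exact isBigO_principal.2 ⟨_, fun x hx => by
      simpa using norm_betaAverage_le hα hK (mapsTo_mul_left_Ioc hx)⟩
  induction q generalizing f with
  | zero =>
    obtain ⟨K, hK⟩ := hf.exists_norm_le
    refine ⟨?_, fun i hi => by simpa [Nat.le_zero.1 hi] using h_bounded hK⟩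
    simpa using continuousOn_betaAverage hα (fun _ => mapsTo_mul_left_Ioc)
      hf.contDiffOn.continuousOn hK
  | succ q ih =>
    obtain ⟨K, hK⟩ := hf.exists_norm_le
    obtain ⟨h_diff, -, h_deriv⟩ := succ_iff.1 hf
    have h_euler : WeightedContDiff q 0 b fun x => x • derivWithin f (Ioc 0 b) x := by
      simpa using (rpow q 1 b).smul h_deriv
    obtain ⟨K', hK'⟩ := h_euler.exists_norm_le
    have h_deriv_average := fun x (hx : x ∈ Ioc 0 b) => hasDerivWithinAt_betaAverage hα
      h_diff.continuousOn hK h_deriv.contDiffOn.continuousOn hK' (fun y hy =>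
        (h_diff y ⟨hy.1, hy.2.le⟩).hasDerivWithinAt.hasDerivAt (Ioc_mem_nhds hy.1 hy.2)) hx
    refine succ_iff.2 ⟨fun x hx => (h_deriv_average x hx).differentiableWithinAt, h_bounded hK, ?_⟩
    have h_smul := (rpow q (-1) b).smul (ih h_euler)
    simp only [Real.rpow_neg_one, neg_add_eq_sub] at h_smul
    exact h_smul.congr fun x hx => (h_deriv_average x hx).derivWithin (uniqueDiffOn_Ioc 0 b x hx)

theorem rlIntegral {α : ℝ} (hα : 0 < α) (hf : WeightedContDiff q 0 b f) :
    WeightedContDiff q α b (rlIntegral α f) := by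
  have h_smul := (rpow q α b).smul (hf.betaAverage hα)
  rw [add_zero] at h_smul
  exact (h_smul.const_smul _).congr fun x hx => rlIntegral_eq_rpow_smul_betaAverage hα f hx.1.le

end WeightedContDiff

section IteratedDerivWithin

variable {𝕜 F : Type*} [NontriviallyNormedField 𝕜] [NormedAddCommGroup F] [NormedSpace 𝕜 F]

theorem iteratedDerivWithin_Icc_eq_Ioc (i : ℕ) (f : ℝ → E) {a b x : ℝ} (hx : a < x) :
    iteratedDerivWithin i f (Icc a b) x = iteratedDerivWithin i f (Ioc a b) x := by
  have h_sets : Icc a b =ᶠ[𝓝 x] Ioc a b := by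
    filter_upwards [Ioi_mem_nhds hx] with y hy
    exact propext (and_congr_left' (iff_of_true (le_of_lt hy) hy))
  rw [iteratedDerivWithin, iteratedDerivWithin, iteratedFDerivWithin_congr_set h_sets]

theorem iteratedDerivWithin_iteratedDerivWithin (n j : ℕ) (f : 𝕜 → F) (s : Set 𝕜) :
    iteratedDerivWithin j (iteratedDerivWithin n f s) s = iteratedDerivWithin (n + j) f s := by
  induction n generalizing f with
  | zero => simp [iteratedDerivWithin_zero]
  | succ n ih => rw [iteratedDerivWithin_succ', ih, add_right_comm, ← iteratedDerivWithin_succ']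

theorem contDiffOn_add_of_iteratedDerivWithin {n q : ℕ} {f : 𝕜 → F} {s : Set 𝕜}
    (hs : UniqueDiffOn 𝕜 s) (hf : ContDiffOn 𝕜 n f s)
    (hq : ContDiffOn 𝕜 q (iteratedDerivWithin n f s) s) : ContDiffOn 𝕜 (n + q : ℕ) f s := by
  induction n generalizing f with
  | zero => simpa [iteratedDerivWithin_zero] using hq
  | succ n ih =>
    rw [Nat.cast_succ, contDiffOn_succ_iff_derivWithin hs] at hf
    rw [iteratedDerivWithin_succ'] at hq
    rw [add_right_comm, Nat.cast_succ, contDiffOn_succ_iff_derivWithin hs]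
    exact ⟨hf.1, by simp, ih hf.2.2 hq⟩

end IteratedDerivWithin

theorem iteratedDerivWithin_eqOn_add_rlIntegral [CompleteSpace E] {b : ℝ} (hb : 0 < b) {α : ℝ}
    (hα0 : 0 < α) (hα1 : α < 1) {n : ℕ} {r φ : ℝ → E} (hr : ContDiffOn ℝ n r (Icc 0 b))
    (hJ : ContDiffOn ℝ (n + 1 : ℕ)
      (rlIntegral (1 - α) fun t => r t - taylorWithinEval r n (Icc 0 b) 0 t) (Ioc 0 b))
    (hφeq : ∀ x ∈ Ioc 0 b, φ x = iteratedDerivWithin (n + 1)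
      (rlIntegral (1 - α) fun t => r t - taylorWithinEval r n (Icc 0 b) 0 t) (Icc 0 b) x)
    (hφ : ContinuousOn φ (Icc 0 b)) :
    EqOn (iteratedDerivWithin n r (Icc 0 b))
      (fun x => iteratedDerivWithin n r (Icc 0 b) 0 + rlIntegral α φ x) (Icc 0 b) := by
  have h_cont : ContinuousOn (fun t =>
      iteratedDerivWithin n r (Icc 0 b) t - iteratedDerivWithin n r (Icc 0 b) 0) (Icc 0 b) :=
    (hr.continuousOn_iteratedDerivWithin le_rfl (uniqueDiffOn_Icc hb)).sub continuousOn_const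
  refine fun x hx => sub_eq_iff_eq_add'.1
    (eqOn_rlIntegral_of_hasDerivAt_rlIntegral hb hα0 hα1 h_cont hφ (fun y hy => ?_) hx)
  have hy' : y ∈ Ioc 0 b := Ioo_subset_Ioc_self hy
  have h_deriv := (hJ.differentiableOn_iteratedDerivWithin (m := n) (mod_cast n.lt_succ_self)
    (uniqueDiffOn_Ioc 0 b) y hy').hasDerivWithinAt.hasDerivAt (Ioc_mem_nhds hy.1 hy.2)
  rw [← iteratedDerivWithin_succ, ← iteratedDerivWithin_Icc_eq_Ioc _ _ hy.1,
    ← hφeq y hy'] at h_deriv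
  refine h_deriv.congr_of_eventuallyEq ?_
  filter_upwards [Ioo_mem_nhds hy.1 hy.2] with z hz
  rw [← iteratedDerivWithin_Icc_eq_Ioc _ _ hz.1]
  exact (iteratedDerivWithin_rlIntegral_sub_taylorWithinEval hb (sub_pos.2 hα1) hr
    (Ioo_subset_Icc_self hz)).symm

section IsBigO

variable {F : Type*} [NormedAddCommGroup F]

theorem isBigO_one_of_continuousOn_Icc {a b : ℝ} {f : ℝ → F} (hf : ContinuousOn f (Icc a b)) :
    f =O[𝓟 (Ioc a b)] fun _ => (1 : ℝ) := by
  obtain ⟨K, hK⟩ := isCompact_Icc.exists_bound_of_continuousOn hf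
  exact isBigO_principal.2 ⟨K, fun x hx => by simpa using hK x (Ioc_subset_Icc_self hx)⟩

theorem rpow_isBigO_rpow_of_le {b β γ : ℝ} (h : β ≤ γ) :
    (fun x : ℝ => x ^ γ) =O[𝓟 (Ioc 0 b)] fun x => x ^ β := by
  refine isBigO_principal.2 ⟨b ^ (γ - β), fun x hx => ?_⟩
  rw [Real.norm_of_nonneg (Real.rpow_nonneg hx.1.le _),
    Real.norm_of_nonneg (Real.rpow_nonneg hx.1.le _)]
  calc x ^ γ = x ^ (γ - β) * x ^ β := by rw [← Real.rpow_add hx.1, sub_add_cancel]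
    _ ≤ b ^ (γ - β) * x ^ β := mul_le_mul_of_nonneg_right
        (Real.rpow_le_rpow hx.1.le hx.2 (sub_nonneg.2 h)) (Real.rpow_nonneg hx.1.le _)

theorem eventually_atTop_forall_norm_le_mul_norm {ι X : Type*} {s : Finset ι} {S : Set X}
    {f : ι → X → F} {g : ι → X → ℝ} (h : ∀ i ∈ s, f i =O[𝓟 S] g i) :
    ∀ᶠ C in atTop, ∀ i ∈ s, ∀ x ∈ S, ‖f i x‖ ≤ C * ‖g i x‖ := by
  simp only [eventually_all_finset, ← isBigOWith_principal]
  exact fun i hi => isBigO_iff_eventually_isBigOWith.1 (h i hi)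

end IsBigO

section Regularity

variable {b γ : ℝ} {n q : ℕ}

theorem weightedContDiff_zero_of_norm_iteratedDerivWithin_le {φ : ℝ → E} {C : ℝ} (hγ : 0 ≤ γ)
    (hφc : ContinuousOn φ (Icc 0 b)) (hφq : ContDiffOn ℝ q φ (Ioc 0 b))
    (hφb : ∀ i : ℕ, 1 ≤ i → i ≤ q → ∀ x ∈ Ioc 0 b,
      ‖iteratedDerivWithin i φ (Icc 0 b) x‖ ≤ C * x ^ (γ - i)) :
    WeightedContDiff q 0 b φ := by
  refine ⟨hφq, fun i hi => ?_⟩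
  rcases i.eq_zero_or_pos with rfl | hi0
  · simpa using isBigO_one_of_continuousOn_Icc hφc
  · have h_isBigO : iteratedDerivWithin i φ (Ioc 0 b) =O[𝓟 (Ioc 0 b)] fun x => x ^ (γ - i) :=
      isBigO_principal.2 ⟨C, fun x hx => by
        rw [← iteratedDerivWithin_Icc_eq_Ioc i φ hx.1,
          Real.norm_of_nonneg (Real.rpow_nonneg hx.1.le _)]
        exact hφb i hi0 hi x hx⟩
    exact h_isBigO.trans (rpow_isBigO_rpow_of_le (by linarith))

theorem WeightedContDiff.isBigO_iteratedDerivWithin_add {r g : ℝ → E} {c : E}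
    (hg : WeightedContDiff q γ b g)
    (hr : EqOn (iteratedDerivWithin n r (Ioc 0 b)) (fun x => c + g x) (Ioc 0 b))
    {j : ℕ} (hj : 0 < j) (hjq : j ≤ q) :
    iteratedDerivWithin (n + j) r (Icc 0 b) =O[𝓟 (Ioc 0 b)] fun x => x ^ (γ - j) := by
  refine (hg.isBigO j hjq).congr' (eventually_principal.2 fun x hx => ?_) .rfl
  rw [iteratedDerivWithin_Icc_eq_Ioc _ _ hx.1, ← iteratedDerivWithin_iteratedDerivWithin,
    iteratedDerivWithin_congr hr hx, iteratedDerivWithin_const_add hj]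

theorem WeightedContDiff.exists_norm_iteratedDerivWithin_le {σ : ℝ} {r g : ℝ → E} {c : E}
    (hg : WeightedContDiff q (σ - n) b g) (hb : 0 < b) (hr : ContDiffOn ℝ n r (Icc 0 b))
    (hrg : EqOn (iteratedDerivWithin n r (Ioc 0 b)) (fun x => c + g x) (Ioc 0 b)) :
    ∃ C : ℝ, ∀ x ∈ Ioc 0 b,
      (∀ i ≤ n, ‖iteratedDerivWithin i r (Icc 0 b) x‖ ≤ C) ∧
      (∀ i : ℕ, n + 1 ≤ i → i ≤ n + q →
        ‖iteratedDerivWithin i r (Icc 0 b) x‖ ≤ C * x ^ (σ - i)) := by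
  have h_low : ∀ i ∈ Finset.Iic n,
      iteratedDerivWithin i r (Icc 0 b) =O[𝓟 (Ioc 0 b)] fun _ => (1 : ℝ) := fun i hi =>
    isBigO_one_of_continuousOn_Icc (hr.continuousOn_iteratedDerivWithin
      (mod_cast Finset.mem_Iic.1 hi) (uniqueDiffOn_Icc hb))
  have h_high : ∀ i ∈ Finset.Icc (n + 1) (n + q),
      iteratedDerivWithin i r (Icc 0 b) =O[𝓟 (Ioc 0 b)] fun x => x ^ (σ - i) := fun i hi => by
    obtain ⟨hni, hiq⟩ := Finset.mem_Icc.1 hi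
    obtain ⟨j, rfl⟩ := Nat.exists_eq_add_of_le (Nat.le_of_succ_le hni)
    simpa only [Nat.cast_add, sub_sub] using
      hg.isBigO_iteratedDerivWithin_add hrg (by lia) (by lia)
  obtain ⟨C, hC_low, hC_high⟩ := ((eventually_atTop_forall_norm_le_mul_norm h_low).and
    (eventually_atTop_forall_norm_le_mul_norm h_high)).exists
  refine ⟨C, fun x hx => ⟨fun i hi => ?_, fun i hni hiq => ?_⟩⟩
  · simpa using hC_low i (Finset.mem_Iic.2 hi) x hx
  · simpa only [Real.norm_of_nonneg (Real.rpow_nonneg hx.1.le _)] using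
      hC_high i (Finset.mem_Icc.2 ⟨hni, hiq⟩) x hx

end Regularity

theorem stmt7_general [CompleteSpace E] {b : ℝ} (hb : 0 < b) (m q : ℕ) (hm : 0 < m)
    (σ : ℝ) (hσ1 : (m : ℝ) - 1 < σ) (hσ2 : σ < m)
    (r : ℝ → E) (hr : ContDiffOn ℝ (m - 1) r (Icc 0 b))
    (hJ : ContDiffOn ℝ m
      (rlIntegral (m - σ) fun t => r t - taylorWithinEval r (m - 1) (Icc 0 b) 0 t) (Ioc 0 b))
    (φ : ℝ → E)
    (hφeq : ∀ x ∈ Ioc 0 b, φ x = iteratedDerivWithin m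
      (rlIntegral (m - σ) fun t => r t - taylorWithinEval r (m - 1) (Icc 0 b) 0 t) (Icc 0 b) x)
    (hφc : ContinuousOn φ (Icc 0 b)) (hφq : ContDiffOn ℝ q φ (Ioc 0 b))
    (C₀ γ : ℝ) (hγ : 0 ≤ γ)
    (hφb : ∀ i : ℕ, 1 ≤ i → i ≤ q → ∀ x ∈ Ioc 0 b,
      ‖iteratedDerivWithin i φ (Icc 0 b) x‖ ≤ C₀ * x ^ (γ - i)) :
    ContDiffOn ℝ (q + m - 1) r (Ioc 0 b) ∧
    ∃ C : ℝ, ∀ x ∈ Ioc 0 b,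
      (∀ i : ℕ, i ≤ m - 1 → ‖iteratedDerivWithin i r (Icc 0 b) x‖ ≤ C) ∧
      (∀ i : ℕ, m ≤ i → i ≤ q + m - 1 →
        ‖iteratedDerivWithin i r (Icc 0 b) x‖ ≤ C * x ^ (σ - i)) := by
  obtain ⟨n, rfl⟩ : ∃ n, m = n + 1 := ⟨m - 1, by lia⟩
  have h_order : ((n + 1 : ℕ) : ℝ) - σ = 1 - (σ - n) := by push_cast; ring
  have h_smoothness : (q : WithTop ℕ∞) + (n + 1 : ℕ) - 1 = (n + q : ℕ) := by
    rw [show n + q = q + (n + 1) - 1 by lia]; norm_cast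
  rw [show ((n + 1 : ℕ) : WithTop ℕ∞) - 1 = n by norm_cast] at hr
  rw [h_order, Nat.add_sub_cancel] at hJ hφeq
  push_cast at hσ1 hσ2
  have h_abel : EqOn (iteratedDerivWithin n r (Ioc 0 b))
      (fun x => iteratedDerivWithin n r (Icc 0 b) 0 + rlIntegral (σ - n) φ x) (Ioc 0 b) :=
    fun x hx => (iteratedDerivWithin_Icc_eq_Ioc n r hx.1).symm.trans <|
      iteratedDerivWithin_eqOn_add_rlIntegral hb (by linarith) (by linarith) hr hJ hφeq hφc
        (Ioc_subset_Icc_self hx)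
  have h_weighted : WeightedContDiff q (σ - n) b (rlIntegral (σ - n) φ) :=
    (weightedContDiff_zero_of_norm_iteratedDerivWithin_le hγ hφc hφq hφb).rlIntegral (by linarith)
  have h_bound := h_weighted.exists_norm_iteratedDerivWithin_le hb hr h_abel
  rw [h_smoothness, show q + (n + 1) - 1 = n + q by lia]
  exact ⟨contDiffOn_add_of_iteratedDerivWithin (uniqueDiffOn_Ioc 0 b)
    (hr.mono Ioc_subset_Icc_self) ((contDiffOn_const.add h_weighted.contDiffOn).congr h_abel),
    h_bound⟩

theorem Jfun_eq_rlIntegral (m : ℕ) (σ : ℝ) (r : ℝ → ℝ) :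
    Jfun m σ r = rlIntegral (m - σ) (wfun m r) := by
  ext x
  simp [Jfun, rlIntegral]

theorem stmt7 (m q : ℕ) (hm : 0 < m) (hq : 1 ≤ q)
    (σ : ℝ) (hσ1 : (m:ℝ) - 1 < σ) (hσ2 : σ < m)
    (r : ℝ → ℝ) (hr : ContDiffOn ℝ (m - 1) r (Set.Icc 0 1))
    (hJ : ContDiffOn ℝ m (Jfun m σ r) (Set.Ioc 0 1))
    (φ : ℝ → ℝ)
    (hφeq : ∀ x ∈ Set.Ioc (0:ℝ) 1,
      φ x = iteratedDerivWithin m (Jfun m σ r) (Set.Icc 0 1) x)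
    (hφc : ContinuousOn φ (Set.Icc 0 1))
    (hφq : ContDiffOn ℝ q φ (Set.Ioc 0 1))
    (C₀ : ℝ)
    (hφb : ∀ i : ℕ, 1 ≤ i → i ≤ q → ∀ x ∈ Set.Ioc (0:ℝ) 1,
      |iteratedDerivWithin i φ (Set.Icc 0 1) x| ≤ C₀ * x ^ (σ - m + 1 - i)) :
    ContDiffOn ℝ (q + m - 1) r (Set.Ioc 0 1) ∧
    ∃ C : ℝ, ∀ x ∈ Set.Ioc (0:ℝ) 1,
      (∀ i : ℕ, i ≤ m - 1 → |iteratedDerivWithin i r (Set.Icc 0 1) x| ≤ C) ∧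
      (∀ i : ℕ, m ≤ i → i ≤ q + m - 1 →
        |iteratedDerivWithin i r (Set.Icc 0 1) x| ≤ C * x ^ (σ - i)) := by
  rw [Jfun_eq_rlIntegral] at hJ hφeq
  exact stmt7_general one_pos m q hm σ hσ1 hσ2 r hr hJ φ hφeq hφc hφq C₀ _ (by linarith) hφb
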